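/- Let F : ℝ₊₊ × ℝ₊₊ → ℝ be symmetric (F(x,y) = F(y,x) for all x,y > 0), positively homogeneous of degree 1 (F(tx,ty) = t·F(x,y) for all t,x,y > 0), and satisfy the cocycle equation F(x,y) + F(x+y,z) = F(x,y+z) + F(y,z) for all x,y,z > 0. Then there exists a function φ : ℝ₊₊ → ℝ satisfying φ(xy) = x·φ(y) + y·φ(x) for all x,y > 0 such that F(x,y) = φ(x+y) − φ(x) − φ(y) for all x,y > 0. -/

import Mathlib

/-!
Extend `F` by zero to the semiring `R` of nonnegative scalars. Symmetry, homogeneity and the cocycle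
equation say exactly that `R × M`, with addition `(x, a) + (y, b) = (x + y, a + b + F x y)` and
multiplication `(x, a) (y, b) = (x y, x b + y a)`, is a commutative semiring `E`. Passing to rings
of formal differences, `E` becomes a square-zero extension of the ground field `K`. Since `K` has
characteristic zero, it is formally smooth over `ℤ`, so the extension splits; the section maps `R`
into `E`, and its second component is `φ`.
-/

open Function TensorProduct

section FormalSmoothness

theorem formallySmooth_int_of_charZero (K : Type*) [Field K] [CharZero K] :
    Algebra.FormallySmooth ℤ K := by
  have smooth_int_rat : Algebra.FormallySmooth ℤ ℚ := .of_isLocalization (nonZeroDivisors ℤ)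
  have smooth_rat : Algebra.FormallySmooth ℚ K := by
    obtain ⟨s, hs⟩ := exists_isTranscendenceBasis ℚ K
    have := hs.isAlgebraic_field
    exact .of_algebraicIndependent_of_isSeparable hs.1
  exact .comp ℤ ℚ K

theorem exists_ringHom_section_of_isNilpotent_ker {A K : Type*} [CommRing A] [CommRing K]
    [Algebra.FormallySmooth ℤ K] (π : A →+* K) (hπ : Surjective π)
    (hker : IsNilpotent (RingHom.ker π)) : ∃ s : K →+* A, ∀ x, π (s x) = x :=
  ⟨(Algebra.FormallySmooth.liftOfSurjective (AlgHom.id ℤ K) π.toIntAlgHom hπ hker).toRingHom,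
    Algebra.FormallySmooth.liftOfSurjective_apply (AlgHom.id ℤ K) π.toIntAlgHom hπ hker⟩

end FormalSmoothness

theorem exists_ringHom_comp_eq_of_forall_exists {R S A : Type*} [NonAssocSemiring R]
    [NonAssocSemiring S] [NonAssocSemiring A] {g : S →+* A} (hg : Injective g) (f : R →+* A)
    (hfg : ∀ x, ∃ a, g a = f x) : ∃ σ : R →+* S, g.comp σ = f := by
  choose σ hσ using hfg
  refine ⟨⟨⟨⟨σ, hg ?_⟩, fun x y => hg ?_⟩, hg ?_, fun x y => hg ?_⟩, RingHom.ext hσ⟩ <;>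
    simp [hσ]

section FormalDifferences

theorem exists_eq_one_tmul_sub_one_tmul {S : Type*} [AddCommMonoid S] (q : ℤ ⊗[ℕ] S) :
    ∃ a b : S, q = 1 ⊗ₜ a - 1 ⊗ₜ b := by
  induction q with
  | zero => exact ⟨0, 0, by simp⟩
  | tmul n a =>
    obtain ⟨k, rfl | rfl⟩ := n.eq_nat_or_neg
    · refine ⟨k • a, 0, ?_⟩
      rw [tmul_zero, sub_zero, tmul_smul, smul_tmul', nsmul_one]
    · refine ⟨0, k • a, ?_⟩
      rw [tmul_zero, zero_sub, tmul_smul, smul_tmul', nsmul_one, neg_tmul]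
  | add q r hq hr =>
    obtain ⟨a, b, rfl⟩ := hq
    obtain ⟨c, d, rfl⟩ := hr
    refine ⟨a + c, b + d, ?_⟩
    rw [tmul_add, tmul_add]
    abel

theorem one_tmul_injective (S : Type*) [AddCommMonoid S] [IsCancelAdd S] :
    Injective fun a : S => (1 : ℤ) ⊗ₜ[ℕ] a := by
  let toGrothendieck : ℤ ⊗[ℕ] S →+ Algebra.GrothendieckAddGroup S :=
    liftAddHom ((smulAddHom ℤ _).compl₂ Algebra.GrothendieckAddGroup.of) fun n k a => by
      simp [mul_smul, smul_comm n]
  intro a b hab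
  apply Algebra.GrothendieckAddGroup.of_injective
  simpa [toGrothendieck, liftAddHom_tmul] using congrArg toGrothendieck hab

variable {S A : Type*} [CommSemiring S] [CommRing A]

/-- The extension of a homomorphism from a semiring `S` to a ring to the ring `ℤ ⊗[ℕ] S` of formal
differences of elements of `S`. -/
noncomputable def differenceLift (f : S →+* A) : ℤ ⊗[ℕ] S →+* A :=
  (Algebra.TensorProduct.productMap (Int.castRingHom A).toNatAlgHom f.toNatAlgHom).toRingHom

@[simp]
theorem differenceLift_one_tmul (f : S →+* A) (a : S) : differenceLift f (1 ⊗ₜ a) = f a := by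
  simp [differenceLift]

variable {R K : Type*} [CommSemiring R] [CommRing K]

/-- A surjective homomorphism of semirings `p : S → R` is a square-zero extension if any two
elements of a fibre differ by an element of the kernel and the product of two kernel elements
vanishes. -/
structure IsSquareZeroExtension (p : S →+* R) : Prop where
  surjective : Surjective p
  exists_eq_add : ∀ a b, p a = p b → ∃ k, p k = 0 ∧ a = b + k
  mul_eq_zero : ∀ k l, p k = 0 → p l = 0 → k * l = 0

namespace IsSquareZeroExtension

variable {p : S →+* R} (hp : IsSquareZeroExtension p) {i : R →+* K} (hi : Injective i)
include hp

theorem differenceLift_surjective (hspan : ∀ x, ∃ a b, x = i a - i b) :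
    Surjective (differenceLift (i.comp p)) := by
  intro x
  obtain ⟨a, b, rfl⟩ := hspan x
  obtain ⟨u, rfl⟩ := hp.surjective a
  obtain ⟨v, rfl⟩ := hp.surjective b
  exact ⟨1 ⊗ₜ u - 1 ⊗ₜ v, by simp⟩

include hi

theorem exists_eq_one_tmul_of_differenceLift_eq_zero {q : ℤ ⊗[ℕ] S}
    (hq : differenceLift (i.comp p) q = 0) : ∃ k, p k = 0 ∧ q = 1 ⊗ₜ k := by
  obtain ⟨a, b, rfl⟩ := exists_eq_one_tmul_sub_one_tmul q
  have hab : p a = p b := hi (by simpa [sub_eq_zero] using hq)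
  obtain ⟨k, hk, rfl⟩ := hp.exists_eq_add a b hab
  exact ⟨k, hk, by rw [tmul_add, add_sub_cancel_left]⟩

theorem ker_differenceLift_sq : RingHom.ker (differenceLift (i.comp p)) ^ 2 = ⊥ := by
  rw [pow_two, eq_bot_iff, Ideal.mul_le]
  intro q hq r hr
  obtain ⟨k, hk, rfl⟩ := hp.exists_eq_one_tmul_of_differenceLift_eq_zero hi hq
  obtain ⟨l, hl, rfl⟩ := hp.exists_eq_one_tmul_of_differenceLift_eq_zero hi hr
  rw [Ideal.mem_bot, Algebra.TensorProduct.tmul_mul_tmul, hp.mul_eq_zero k l hk hl, tmul_zero]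

theorem exists_one_tmul_eq {q : ℤ ⊗[ℕ] S} {x : R} (hq : differenceLift (i.comp p) q = i x) :
    ∃ a : S, 1 ⊗ₜ a = q := by
  obtain ⟨a, rfl⟩ := hp.surjective x
  obtain ⟨k, -, hk⟩ := hp.exists_eq_one_tmul_of_differenceLift_eq_zero hi
    (q := q - 1 ⊗ₜ a) (by simp [hq])
  exact ⟨k + a, by rw [tmul_add, ← hk, sub_add_cancel]⟩

theorem exists_section [IsCancelAdd S] [Algebra.FormallySmooth ℤ K]
    (hspan : ∀ x, ∃ a b, x = i a - i b) : ∃ σ : R →+* S, ∀ x, p (σ x) = x := by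
  obtain ⟨s, hs⟩ := exists_ringHom_section_of_isNilpotent_ker (differenceLift (i.comp p))
    (hp.differenceLift_surjective hspan) ⟨2, hp.ker_differenceLift_sq hi⟩
  let ofSemiring : S →+* ℤ ⊗[ℕ] S := Algebra.TensorProduct.includeRight.toRingHom
  have hinj : Injective ofSemiring := one_tmul_injective S
  obtain ⟨σ, hσ⟩ := exists_ringHom_comp_eq_of_forall_exists hinj (s.comp i)
    fun x => hp.exists_one_tmul_eq hi (hs (i x))
  refine ⟨σ, fun x => hi ?_⟩
  calc i (p (σ x)) = differenceLift (i.comp p) (1 ⊗ₜ σ x) := by simp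
    _ = differenceLift (i.comp p) (s (i x)) := congrArg _ (RingHom.congr_fun hσ x)
    _ = i x := hs (i x)

end IsSquareZeroExtension

end FormalDifferences

/-- A symmetric cocycle on a commutative semiring `R` with values in an `R`-module `M`, normalized
by vanishing at `0` and homogeneous of degree `1`. -/
structure HomogeneousCocycle (R M : Type*) [CommSemiring R] [AddCommGroup M] [Module R M] where
  toFun : R → R → M
  symm : ∀ x y, toFun x y = toFun y x
  zero_left : ∀ y, toFun 0 y = 0
  smul : ∀ t x y, toFun (t * x) (t * y) = t • toFun x y
  cocycle : ∀ x y z, toFun x y + toFun (x + y) z = toFun x (y + z) + toFun y z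

namespace HomogeneousCocycle

variable {R M : Type*} [CommSemiring R] [AddCommGroup M] [Module R M]

instance : CoeFun (HomogeneousCocycle R M) fun _ => R → R → M := ⟨toFun⟩

theorem zero_right (G : HomogeneousCocycle R M) (x : R) : G x 0 = 0 := by
  rw [G.symm, G.zero_left]

/-- The semiring extension of `R` by the square-zero module `M` whose addition is twisted by the
cocycle `G`. -/
@[ext]
structure Extension (G : HomogeneousCocycle R M) where
  base : R
  fiber : M

namespace Extension

variable {G : HomogeneousCocycle R M}

instance : Zero G.Extension := ⟨⟨0, 0⟩⟩

instance : One G.Extension := ⟨⟨1, 0⟩⟩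

instance : Add G.Extension := ⟨fun u v => ⟨u.base + v.base, u.fiber + v.fiber + G u.base v.base⟩⟩

instance : Mul G.Extension := ⟨fun u v => ⟨u.base * v.base, u.base • v.fiber + v.base • u.fiber⟩⟩

@[simp] theorem base_zero : (0 : G.Extension).base = 0 := rfl

@[simp] theorem fiber_zero : (0 : G.Extension).fiber = 0 := rfl

@[simp] theorem base_one : (1 : G.Extension).base = 1 := rfl

@[simp] theorem fiber_one : (1 : G.Extension).fiber = 0 := rfl

@[simp] theorem base_add (u v : G.Extension) : (u + v).base = u.base + v.base := rfl

@[simp] theorem fiber_add (u v : G.Extension) :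
    (u + v).fiber = u.fiber + v.fiber + G u.base v.base := rfl

@[simp] theorem base_mul (u v : G.Extension) : (u * v).base = u.base * v.base := rfl

@[simp] theorem fiber_mul (u v : G.Extension) :
    (u * v).fiber = u.base • v.fiber + v.base • u.fiber := rfl

protected theorem add_assoc (u v w : G.Extension) : u + v + w = u + (v + w) := by
  ext
  · exact add_assoc ..
  · have hcoc := G.cocycle u.base v.base w.base
    simp only [fiber_add, base_add]
    calc u.fiber + v.fiber + G u.base v.base + w.fiber + G (u.base + v.base) w.base
        = u.fiber + v.fiber + w.fiber + (G u.base v.base + G (u.base + v.base) w.base) := by abel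
      _ = u.fiber + (v.fiber + w.fiber + G v.base w.base) + G u.base (v.base + w.base) := by
        rw [hcoc]; abel

protected theorem add_comm (u v : G.Extension) : u + v = v + u := by
  ext
  · exact add_comm ..
  · rw [fiber_add, fiber_add, G.symm, add_comm u.fiber]

protected theorem mul_comm (u v : G.Extension) : u * v = v * u :=
  Extension.ext (mul_comm ..) (add_comm ..)

protected theorem mul_assoc (u v w : G.Extension) : u * v * w = u * (v * w) := by
  ext
  · exact mul_assoc ..
  · simp only [fiber_mul, base_mul]
    module

protected theorem mul_add (u v w : G.Extension) : u * (v + w) = u * v + u * w := by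
  ext
  · exact mul_add ..
  · simp only [fiber_mul, fiber_add, base_mul, base_add, G.smul]
    module

instance : CommSemiring G.Extension where
  add_assoc := Extension.add_assoc
  add_comm := Extension.add_comm
  zero_add u := by ext <;> simp [G.zero_left]
  add_zero u := by ext <;> simp [G.zero_right]
  mul_assoc := Extension.mul_assoc
  mul_comm := Extension.mul_comm
  one_mul u := by ext <;> simp
  mul_one u := by ext <;> simp
  zero_mul u := by ext <;> simp
  mul_zero u := by ext <;> simp
  left_distrib := Extension.mul_add
  right_distrib u v w := by simp only [Extension.mul_comm _ w, Extension.mul_add]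
  nsmul := nsmulRec

instance [IsCancelAdd R] : IsCancelAdd G.Extension :=
  have : IsLeftCancelAdd G.Extension := ⟨fun u v w huvw => by
    have hbase : v.base = w.base := add_left_cancel (congrArg base huvw)
    have hfiber := congrArg fiber huvw
    simp only [fiber_add, hbase, add_left_inj, add_right_inj] at hfiber
    exact Extension.ext hbase hfiber⟩
  AddCommMagma.IsLeftCancelAdd.toIsCancelAdd G.Extension

variable (G) in
/-- The projection of the twisted extension onto its base semiring. -/
def baseHom : G.Extension →+* R where
  toFun := base
  map_zero' := rfl
  map_one' := rfl
  map_add' _ _ := rfl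
  map_mul' _ _ := rfl

@[simp]
theorem baseHom_apply (u : G.Extension) : baseHom G u = u.base := rfl

variable (G) in
theorem isSquareZeroExtension_baseHom : IsSquareZeroExtension (baseHom G) where
  surjective x := ⟨⟨x, 0⟩, rfl⟩
  exists_eq_add u v huv :=
    ⟨⟨0, u.fiber - v.fiber⟩, rfl, Extension.ext (by simpa using huv) (by simp [G.zero_right])⟩
  mul_eq_zero u v hu hv := by
    rw [baseHom_apply] at hu hv
    ext <;> simp [hu, hv]

end Extension

theorem exists_coboundary {K : Type*} [CommRing K] [Algebra.FormallySmooth ℤ K]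
    (G : HomogeneousCocycle R M) {i : R →+* K} (hi : Injective i)
    (hspan : ∀ x, ∃ a b, x = i a - i b) :
    ∃ φ : R → M, (∀ x y, φ (x * y) = x • φ y + y • φ x) ∧
      ∀ x y, G x y = φ (x + y) - φ x - φ y := by
  have : IsCancelAdd R := hi.isCancelAdd i (map_add i)
  obtain ⟨σ, hσ⟩ := (Extension.isSquareZeroExtension_baseHom G).exists_section hi hspan
  simp only [Extension.baseHom_apply] at hσ
  refine ⟨fun x => (σ x).fiber, fun x y => ?_, fun x y => ?_⟩
  · simp only [map_mul, Extension.fiber_mul, hσ]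
  · simp only [map_add, Extension.fiber_add, hσ]
    abel

section Positive

variable {K : Type*} [CommRing K] [LinearOrder K] [IsStrictOrderedRing K] [Module K M]

open Classical in
/-- The extension by zero to nonnegative scalars of a symmetric cocycle given on positive ones. -/
noncomputable def ofPos (F : K → K → M)
    (hsym : ∀ x y, 0 < x → 0 < y → F x y = F y x)
    (hhom : ∀ t x y, 0 < t → 0 < x → 0 < y → F (t * x) (t * y) = t • F x y)
    (hcoc : ∀ x y z, 0 < x → 0 < y → 0 < z → F x y + F (x + y) z = F x (y + z) + F y z) :
    HomogeneousCocycle {x : K // 0 ≤ x} M where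
  toFun x y := if x = 0 ∨ y = 0 then 0 else F x y
  symm x y := by
    rcases eq_zero_or_pos x with rfl | hx
    · simp
    rcases eq_zero_or_pos y with rfl | hy
    · simp
    simpa [hx.ne', hy.ne'] using hsym x y hx hy
  zero_left y := by simp
  smul t x y := by
    rcases eq_zero_or_pos t with rfl | ht
    · simp
    rcases eq_zero_or_pos x with rfl | hx
    · simp
    rcases eq_zero_or_pos y with rfl | hy
    · simp
    simpa [ht.ne', hx.ne', hy.ne'] using hhom t x y ht hx hy
  cocycle x y z := by
    rcases eq_zero_or_pos x with rfl | hx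
    · simp
    rcases eq_zero_or_pos y with rfl | hy
    · simp
    rcases eq_zero_or_pos z with rfl | hz
    · simp
    simpa [hx.ne', hy.ne', hz.ne', (add_pos hx hy).ne', (add_pos hy hz).ne'] using
      hcoc x y z hx hy hz

theorem ofPos_apply {F : K → K → M} {hsym hhom hcoc} {x y : {x : K // 0 ≤ x}}
    (hx : 0 < x) (hy : 0 < y) : ofPos F hsym hhom hcoc x y = F x y :=
  if_neg (by simp [hx.ne', hy.ne'])

end Positive

end HomogeneousCocycle

theorem exists_nonneg_eq_sub {K : Type*} [AddCommGroup K] [LinearOrder K] [IsOrderedAddMonoid K]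
    (x : K) : ∃ a b : {x : K // 0 ≤ x}, x = a - b :=
  ⟨⟨x⁺, posPart_nonneg x⟩, ⟨x⁻, negPart_nonneg x⟩, (posPart_sub_negPart x).symm⟩

theorem jessen_karpf_thorup_cocycle_general {K M : Type*} [Field K] [LinearOrder K]
    [IsStrictOrderedRing K] [AddCommGroup M] [Module K M] (F : K → K → M)
    (hsym : ∀ x y, 0 < x → 0 < y → F x y = F y x)
    (hhom : ∀ t x y, 0 < t → 0 < x → 0 < y → F (t * x) (t * y) = t • F x y)
    (hcoc : ∀ x y z, 0 < x → 0 < y → 0 < z → F x y + F (x + y) z = F x (y + z) + F y z) :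
    ∃ φ : K → M, (∀ x y, 0 < x → 0 < y → φ (x * y) = x • φ y + y • φ x) ∧
      ∀ x y, 0 < x → 0 < y → F x y = φ (x + y) - φ x - φ y := by
  have := formallySmooth_int_of_charZero K
  obtain ⟨φ, hmul, hadd⟩ := (HomogeneousCocycle.ofPos F hsym hhom hcoc).exists_coboundary
    (i := Nonneg.coeRingHom) Subtype.val_injective exists_nonneg_eq_sub
  refine ⟨fun x => φ (Nonneg.toNonneg x), fun x y hx hy => ?_, fun x y hx hy => ?_⟩
  · lift x to {x : K // 0 ≤ x} using hx.le
    lift y to {x : K // 0 ≤ x} using hy.le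
    simpa [← Nonneg.coe_mul] using hmul x y
  · lift x to {x : K // 0 ≤ x} using hx.le
    lift y to {x : K // 0 ≤ x} using hy.le
    simpa [← Nonneg.coe_add, HomogeneousCocycle.ofPos_apply hx hy] using hadd x y

/-- Jessen–Karpf–Thorup: every symmetric, positively 1-homogeneous solution of
the cocycle equation on `ℝ₊₊` has the form `F(x,y) = φ(x+y) − φ(x) − φ(y)`
where `φ(xy) = x·φ(y) + y·φ(x)`. -/
theorem jessen_karpf_thorup_cocycle
    (F : ℝ → ℝ → ℝ)
    (hsym : ∀ x y : ℝ, 0 < x → 0 < y → F x y = F y x)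
    (hhom : ∀ t x y : ℝ, 0 < t → 0 < x → 0 < y → F (t * x) (t * y) = t * F x y)
    (hcoc : ∀ x y z : ℝ, 0 < x → 0 < y → 0 < z →
      F x y + F (x + y) z = F x (y + z) + F y z) :
    ∃ φ : ℝ → ℝ,
      (∀ x y : ℝ, 0 < x → 0 < y → φ (x * y) = x * φ y + y * φ x) ∧
      (∀ x y : ℝ, 0 < x → 0 < y → F x y = φ (x + y) - φ x - φ y) :=
  jessen_karpf_thorup_cocycle_general F hsym hhom hcoc
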